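/- For every odd n ≥ 3, the function h_n defined by h_n(x) = sgn(2·(x_1 + ⋯ + x_{n−3}) − (x_{n−2} + x_{n−1} + x_n)) satisfies W^(0)[h_n] = 0 and W^(1)[h_n] = W^(1)[g_n]. Consequently, for every odd n ≥ 5, W^(1)[h_n] < W^(1)[Maj_n]. -/

import Mathlib

open Finset

namespace BKS

/-- sign function: 1 if z ≥ 0, -1 otherwise. -/
noncomputable def sgn (z : ℝ) : ℝ := if 0 ≤ z then 1 else -1

/-- encode Bool as the ±1 value of a bit. -/
def chi (b : Bool) : ℝ := if b then 1 else -1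

/-- Fourier coefficient of f at S. -/
noncomputable def fourierCoeff {n : ℕ} (f : (Fin n → Bool) → ℝ) (S : Finset (Fin n)) : ℝ :=
  (1 / 2 ^ n : ℝ) * ∑ x : Fin n → Bool, f x * ∏ i ∈ S, chi (x i)

/-- Fourier weight of f at level k: W^(k)[f]. -/
noncomputable def fourierWeight {n : ℕ} (k : ℕ) (f : (Fin n → Bool) → ℝ) : ℝ :=
  ∑ S ∈ Finset.univ.filter (fun S : Finset (Fin n) => S.card = k), (fourierCoeff f S) ^ 2

/-- Noise stability of f at ρ. -/
noncomputable def noiseStab {n : ℕ} (ρ : ℝ) (f : (Fin n → Bool) → ℝ) : ℝ :=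
  ∑ k ∈ Finset.range (n + 1), ρ ^ k * fourierWeight k f

/-- Majority function on n bits. -/
noncomputable def Maj (n : ℕ) : (Fin n → Bool) → ℝ := fun x => sgn (∑ i, chi (x i))

/-- The function g_n(x) = sgn(2(x_1 + ⋯ + x_{n-3}) + x_{n-2} + x_{n-1} + x_n). -/
noncomputable def gfun (n : ℕ) : (Fin n → Bool) → ℝ :=
  fun x => sgn (∑ i : Fin n, (if (i : ℕ) < n - 3 then (2 : ℝ) else 1) * chi (x i))

/-- f is a linear threshold function. -/
def IsLTF {n : ℕ} (f : (Fin n → Bool) → ℝ) : Prop :=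
  ∃ (w0 : ℝ) (w : Fin n → ℝ), ∀ x, f x = sgn (w0 + ∑ i, w i * chi (x i))


/-- The function h_n(x) = sgn(2(x_1 + ⋯ + x_{n-3}) − (x_{n-2} + x_{n-1} + x_n)). -/
noncomputable def hfun (n : ℕ) : (Fin n → Bool) → ℝ :=
  fun x => sgn (∑ i : Fin n, (if (i : ℕ) < n - 3 then (2 : ℝ) else -1) * chi (x i))

/-!
Let `p m` be the probability that `m` uniform signs sum to zero. For even `m`, `g_{m+3}` is the
majority of its first `m` bits with ties broken by `Maj₃` of the last three. Each degree-one
coefficient of the majority of `m` bits is `p m`, and a tie-breaker `t` with mean zero adds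
`p m ^ 2 * W¹[t]` to its weight, so `W¹[g_{m+3}] = p m ^ 2 * (m + 3/4)`. On the other hand,
`W¹[Maj_{m+3}] = p (m + 2) ^ 2 * (m + 3)` with `p (m + 2) = (m + 1) / (m + 2) * p m`, which is
larger. Finally, `h` is `g` with the last three inputs negated, and this changes Fourier
coefficients only by a sign.
-/

section Fourier

variable {m n : ℕ}

lemma fourierWeight_zero (f : (Fin n → Bool) → ℝ) :
    fourierWeight 0 f = fourierCoeff f ∅ ^ 2 := by
  rw [fourierWeight, univ_filter_card_eq, powersetCard_zero, sum_singleton]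

lemma fourierWeight_one (f : (Fin n → Bool) → ℝ) :
    fourierWeight 1 f = ∑ i, fourierCoeff f {i} ^ 2 := by
  rw [fourierWeight, univ_filter_card_eq, powersetCard_one, sum_map]
  rfl

lemma fourierCoeff_add (f g : (Fin n → Bool) → ℝ) (S : Finset (Fin n)) :
    fourierCoeff (f + g) S = fourierCoeff f S + fourierCoeff g S := by
  simp only [fourierCoeff, Pi.add_apply, add_mul, sum_add_distrib, mul_add]

lemma fourierCoeff_neg (f : (Fin n → Bool) → ℝ) (S : Finset (Fin n)) :
    fourierCoeff (-f) S = -fourierCoeff f S := by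
  simp only [fourierCoeff, Pi.neg_apply, neg_mul, sum_neg_distrib, mul_neg]

lemma fourierCoeff_one_empty : fourierCoeff (1 : (Fin n → Bool) → ℝ) ∅ = 1 := by
  simp [fourierCoeff]

lemma sum_eq_sum_insertNth (F : (Fin (m + 1) → Bool) → ℝ) (i : Fin (m + 1)) :
    ∑ x, F x = ∑ y : Fin m → Bool, (F (i.insertNth true y) + F (i.insertNth false y)) := by
  rw [← (Fin.insertNthEquiv (fun _ ↦ Bool) i).sum_comp, Fintype.sum_prod_type, Fintype.sum_bool,
    ← sum_add_distrib]
  rfl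

lemma fourierCoeff_empty_eq_insertNth (f : (Fin (m + 1) → Bool) → ℝ) (i : Fin (m + 1)) :
    fourierCoeff f ∅ =
      fourierCoeff (fun y ↦ (f (i.insertNth true y) + f (i.insertNth false y)) / 2) ∅ := by
  simp only [fourierCoeff, sum_eq_sum_insertNth _ i, prod_empty, mul_one, ← sum_div]
  ring

lemma fourierCoeff_singleton_eq_insertNth (f : (Fin (m + 1) → Bool) → ℝ) (i : Fin (m + 1)) :
    fourierCoeff f {i} =
      fourierCoeff (fun y ↦ (f (i.insertNth true y) - f (i.insertNth false y)) / 2) ∅ := by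
  simp only [fourierCoeff, sum_eq_sum_insertNth _ i, prod_singleton, Fin.insertNth_apply_same,
    chi, prod_empty, mul_one, ← sum_div, if_true, Bool.false_eq_true, if_false, mul_neg_one,
    ← sub_eq_add_neg]
  ring

end Fourier

section Flip

variable {n : ℕ}

/-- The point `x` of the cube with the bits in `s` negated. -/
def flipOn (s : Finset (Fin n)) (x : Fin n → Bool) : Fin n → Bool :=
  fun i ↦ if i ∈ s then !x i else x i

lemma flipOn_involutive (s : Finset (Fin n)) : Function.Involutive (flipOn s) := by
  intro x
  ext i
  by_cases hi : i ∈ s <;> simp [flipOn, hi]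

lemma chi_flipOn (s : Finset (Fin n)) (x : Fin n → Bool) (i : Fin n) :
    chi (flipOn s x i) = (if i ∈ s then -1 else 1) * chi (x i) := by
  by_cases hi : i ∈ s <;> cases hx : x i <;> simp [flipOn, hi, hx, chi]

lemma fourierCoeff_comp_flipOn (f : (Fin n → Bool) → ℝ) (s S : Finset (Fin n)) :
    fourierCoeff (f ∘ flipOn s) S = (∏ i ∈ S, if i ∈ s then -1 else 1) * fourierCoeff f S := by
  have reindex : ∑ x, f (flipOn s x) * ∏ i ∈ S, chi (x i) =
      ∑ x, f x * ∏ i ∈ S, chi (flipOn s x i) :=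
    Fintype.sum_equiv (flipOn_involutive s).toPerm _ _ fun x ↦ by
      simp [(flipOn_involutive s) x]
  simp only [fourierCoeff, Function.comp_apply, reindex, chi_flipOn, prod_mul_distrib, mul_sum]
  exact sum_congr rfl fun x _ ↦ by ring

lemma fourierWeight_comp_flipOn (f : (Fin n → Bool) → ℝ) (s : Finset (Fin n)) (k : ℕ) :
    fourierWeight k (f ∘ flipOn s) = fourierWeight k f := by
  refine sum_congr rfl fun S _ ↦ ?_
  have sign_sq : (∏ i ∈ S, if i ∈ s then (-1 : ℝ) else 1) ^ 2 = 1 := by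
    rw [← prod_pow]
    exact prod_eq_one fun i _ ↦ by split_ifs <;> norm_num
  rw [fourierCoeff_comp_flipOn, mul_pow, sign_sq, one_mul]

lemma fourierCoeff_eq_zero_of_odd {f : (Fin n → Bool) → ℝ} (hf : f ∘ flipOn univ = -f)
    {S : Finset (Fin n)} (hS : Even #S) : fourierCoeff f S = 0 := by
  have h := fourierCoeff_comp_flipOn f univ S
  simp only [hf, fourierCoeff_neg, mem_univ, if_true, prod_const, hS.neg_one_pow, one_mul] at h
  linarith

end Flip

section Tensor

variable {m n : ℕ}

/-- The function `(y, z) ↦ u y * v z`, where `y` consists of the first `m` bits of the input and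
`z` of the last `n`. -/
def tensor (u : (Fin m → Bool) → ℝ) (v : (Fin n → Bool) → ℝ) : (Fin (m + n) → Bool) → ℝ :=
  fun x ↦ u (fun i ↦ x (Fin.castAdd n i)) * v (fun j ↦ x (Fin.natAdd m j))

lemma fourierCoeff_tensor (u : (Fin m → Bool) → ℝ) (v : (Fin n → Bool) → ℝ)
    (S : Finset (Fin m)) (T : Finset (Fin n)) :
    fourierCoeff (tensor u v) (S.map (Fin.castAddEmb n) ∪ T.map (Fin.natAddEmb m)) =
      fourierCoeff u S * fourierCoeff v T := by
  have disj : Disjoint (S.map (Fin.castAddEmb n)) (T.map (Fin.natAddEmb m)) := by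
    simp only [disjoint_left, mem_map]
    rintro _ ⟨i, _, rfl⟩ ⟨j, _, h⟩
    have := congrArg Fin.val h
    simp only [Fin.castAddEmb_apply, Fin.natAddEmb_apply, Fin.val_natAdd, Fin.val_castAdd] at this
    lia
  simp only [fourierCoeff, ← (Fin.appendEquiv m n).sum_comp, Fintype.sum_prod_type,
    prod_union disj, prod_map, tensor, Fin.appendEquiv, Equiv.coe_fn_mk, Fin.castAddEmb_apply,
    Fin.natAddEmb_apply, Fin.append_left, Fin.append_right]
  rw [mul_mul_mul_comm, sum_mul_sum, pow_add, one_div_mul_one_div]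
  simp only [mul_mul_mul_comm]

lemma fourierCoeff_tensor_empty (u : (Fin m → Bool) → ℝ) (v : (Fin n → Bool) → ℝ) :
    fourierCoeff (tensor u v) ∅ = fourierCoeff u ∅ * fourierCoeff v ∅ := by
  simpa using fourierCoeff_tensor u v ∅ ∅

lemma fourierCoeff_tensor_castAdd (u : (Fin m → Bool) → ℝ) (v : (Fin n → Bool) → ℝ) (i : Fin m) :
    fourierCoeff (tensor u v) {Fin.castAdd n i} = fourierCoeff u {i} * fourierCoeff v ∅ := by
  simpa using fourierCoeff_tensor u v {i} ∅

lemma fourierCoeff_tensor_natAdd (u : (Fin m → Bool) → ℝ) (v : (Fin n → Bool) → ℝ) (j : Fin n) :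
    fourierCoeff (tensor u v) {Fin.natAdd m j} = fourierCoeff u ∅ * fourierCoeff v {j} := by
  simpa using fourierCoeff_tensor u v ∅ {j}

end Tensor

section BitSum

variable {m n : ℕ}

/-- The sum `x_1 + ⋯ + x_n` of the input read as signs. -/
noncomputable def bitSum (x : Fin n → Bool) : ℝ := ∑ i, chi (x i)

lemma bitSum_eq_two_mul_card_sub (x : Fin n → Bool) : bitSum x = 2 * #{i | x i} - n := by
  have chi_eq (b : Bool) : chi b = 2 * (if b then 1 else 0) - 1 := by
    cases b <;> norm_num [chi]
  simp only [bitSum, chi_eq, sum_sub_distrib, ← mul_sum, sum_boole]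
  simp

lemma exists_int_eq_bitSum (x : Fin n → Bool) : ∃ z : ℤ, bitSum x = z :=
  ⟨2 * #{i | x i} - n, by simp [bitSum_eq_two_mul_card_sub]⟩

lemma bitSum_ne_zero_of_odd (hn : Odd n) (x : Fin n → Bool) : bitSum x ≠ 0 := by
  rw [bitSum_eq_two_mul_card_sub, sub_ne_zero]
  norm_cast
  grind

lemma two_le_abs_bitSum_of_even (hn : Even n) {x : Fin n → Bool} (hx : bitSum x ≠ 0) :
    2 ≤ |bitSum x| := by
  obtain ⟨k, rfl⟩ := hn.two_dvd
  rw [bitSum_eq_two_mul_card_sub] at hx ⊢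
  norm_cast at hx ⊢
  grind

lemma abs_bitSum_le (x : Fin n → Bool) : |bitSum x| ≤ n := by
  have abs_chi (b : Bool) : |chi b| = 1 := by cases b <;> simp [chi]
  simpa [bitSum, abs_chi] using abs_sum_le_sum_abs (fun i ↦ chi (x i)) univ

lemma bitSum_insertNth (i : Fin (m + 1)) (b : Bool) (y : Fin m → Bool) :
    bitSum (i.insertNth b y : Fin (m + 1) → Bool) = bitSum y + chi b := by
  simp [bitSum, Fin.sum_univ_succAbove _ i, add_comm]

lemma bitSum_flipOn_univ (x : Fin n → Bool) : bitSum (flipOn univ x) = -bitSum x := by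
  simp [bitSum, chi_flipOn]

end BitSum

section Tie

/-- The indicator function of the ties, that is, of the inputs whose signs sum to zero. -/
noncomputable def tie (n : ℕ) : (Fin n → Bool) → ℝ := fun x ↦ if bitSum x = 0 then 1 else 0

/-- The probability that `n` uniform signs sum to zero, that is, the mean of `tie n`. -/
noncomputable def tieProb (n : ℕ) : ℝ := fourierCoeff (tie n) ∅

lemma tieProb_of_odd {n : ℕ} (hn : Odd n) : tieProb n = 0 := by
  simp [tieProb, fourierCoeff, tie, bitSum_ne_zero_of_odd hn]

lemma card_filter_card_true_eq (α : Type*) [Fintype α] [DecidableEq α] (k : ℕ) :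
    #{x : α → Bool | #{i | x i} = k} = (Fintype.card α).choose k := by
  have card_eq : #{x : α → Bool | #{i | x i} = k} = #(powersetCard k (univ : Finset α)) :=
    card_bij' (fun x _ ↦ ({i | x i} : Finset α)) (fun s _ i ↦ decide (i ∈ s))
      (by simp) (by simp) (by simp) (by simp)
  rw [card_eq, card_powersetCard, card_univ]

lemma tieProb_two_mul (k : ℕ) : tieProb (2 * k) = k.centralBinom / 4 ^ k := by
  have bitSum_eq_zero_iff (x : Fin (2 * k) → Bool) : bitSum x = 0 ↔ #{i | x i} = k := by
    rw [bitSum_eq_two_mul_card_sub, sub_eq_zero]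
    norm_cast
    simp
  simp only [tieProb, fourierCoeff, tie, bitSum_eq_zero_iff, prod_empty, mul_one, sum_boole,
    card_filter_card_true_eq, Fintype.card_fin, pow_mul, Nat.centralBinom_eq_two_mul_choose]
  norm_num
  ring

lemma tieProb_pos_of_even {n : ℕ} (hn : Even n) : 0 < tieProb n := by
  obtain ⟨k, rfl⟩ := hn.two_dvd
  rw [tieProb_two_mul]
  have := k.centralBinom_pos
  positivity

lemma tieProb_add_two (n : ℕ) : tieProb (n + 2) = (n + 1) / (n + 2) * tieProb n := by
  rcases n.even_or_odd with hn | hn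
  · obtain ⟨k, rfl⟩ := hn.two_dvd
    have recurrence : ((k : ℝ) + 1) * (k + 1).centralBinom = 2 * (2 * k + 1) * k.centralBinom :=
      mod_cast k.succ_mul_centralBinom_succ
    rw [← mul_add_one, tieProb_two_mul, tieProb_two_mul]
    push_cast
    field_simp
    linear_combination 2 * 4 ^ k * recurrence
  · rw [tieProb_of_odd hn, tieProb_of_odd (hn.add_even even_two), mul_zero]

end Tie

section Majority

variable {m n : ℕ}

/-- The majority function with the value `0` on ties. Unlike `Maj n` it is odd for every `n`. -/
noncomputable def symmMaj (n : ℕ) : (Fin n → Bool) → ℝ := fun x ↦ Real.sign (bitSum x)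

lemma fourierCoeff_symmMaj_empty (n : ℕ) : fourierCoeff (symmMaj n) ∅ = 0 := by
  refine fourierCoeff_eq_zero_of_odd ?_ (by simp)
  ext x
  simp [symmMaj, bitSum_flipOn_univ, Real.sign_neg]

lemma sign_add_one_sub_sign_sub_one (z : ℤ) :
    Real.sign (z + 1) - Real.sign (z - 1) =
      2 * (if (z : ℝ) = 0 then 1 else 0) +
        ((if (z : ℝ) + 1 = 0 then 1 else 0) + if (z : ℝ) - 1 = 0 then 1 else 0) := by
  have int_identity : (z + 1).sign - (z - 1).sign =
      2 * (if z = 0 then 1 else 0) +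
        ((if z + 1 = 0 then 1 else 0) + if z - 1 = 0 then 1 else 0) := by
    grind [Int.sign_eq_one_of_pos, Int.sign_eq_neg_one_of_neg, Int.sign_zero]
  have sign_add_one : Real.sign (z + 1) = (z + 1).sign := mod_cast Real.sign_intCast (z + 1)
  have sign_sub_one : Real.sign (z - 1) = (z - 1).sign := mod_cast Real.sign_intCast (z - 1)
  rw [sign_add_one, sign_sub_one]
  exact_mod_cast int_identity

lemma fourierCoeff_symmMaj_singleton (i : Fin (m + 1)) :
    fourierCoeff (symmMaj (m + 1)) {i} = tieProb m + tieProb (m + 1) := by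
  unfold tieProb
  rw [fourierCoeff_singleton_eq_insertNth, fourierCoeff_empty_eq_insertNth (tie (m + 1)) i,
    ← fourierCoeff_add]
  congr 1
  ext y
  obtain ⟨z, hz⟩ := exists_int_eq_bitSum y
  have := sign_add_one_sub_sign_sub_one z
  simp only [symmMaj, tie, Pi.add_apply, bitSum_insertNth, hz, chi, if_true, Bool.false_eq_true,
    if_false, ← sub_eq_add_neg]
  linarith

lemma fourierWeight_one_symmMaj_of_even (hn : Even n) :
    fourierWeight 1 (symmMaj n) = n * tieProb n ^ 2 := by
  cases n with
  | zero => simp [fourierWeight_one]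
  | succ m =>
    have hm : Odd m := by grind
    simp [fourierWeight_one, fourierCoeff_symmMaj_singleton, tieProb_of_odd hm]

lemma sgn_eq_sign_of_ne_zero {z : ℝ} (hz : z ≠ 0) : sgn z = Real.sign z := by
  rcases hz.lt_or_gt with h | h
  · rw [sgn, if_neg h.not_ge, Real.sign_of_neg h]
  · rw [sgn, if_pos h.le, Real.sign_of_pos h]

lemma maj_eq_symmMaj_of_odd (hn : Odd n) : Maj n = symmMaj n :=
  funext fun x ↦ sgn_eq_sign_of_ne_zero (bitSum_ne_zero_of_odd hn x)

lemma fourierCoeff_maj_empty_of_odd (hn : Odd n) : fourierCoeff (Maj n) ∅ = 0 := by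
  rw [maj_eq_symmMaj_of_odd hn, fourierCoeff_symmMaj_empty]

lemma fourierWeight_one_maj_of_even (hm : Even m) :
    fourierWeight 1 (Maj (m + 1)) = (m + 1) * tieProb m ^ 2 := by
  simp [maj_eq_symmMaj_of_odd hm.add_one, fourierWeight_one, fourierCoeff_symmMaj_singleton,
    tieProb_of_odd hm.add_one]

lemma fourierWeight_one_maj_three : fourierWeight 1 (Maj 3) = 3 / 4 := by
  have tieProb_two : tieProb 2 = 1 / 2 := by
    rw [← mul_one 2, tieProb_two_mul]
    norm_num [Nat.centralBinom]
  rw [fourierWeight_one_maj_of_even even_two, tieProb_two]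
  norm_num

end Majority

section TieBreak

variable {m n : ℕ}

/-- The majority of the first `m` bits, with ties decided by `t` applied to the last `n` bits. -/
noncomputable def tieBreak (m : ℕ) (t : (Fin n → Bool) → ℝ) : (Fin (m + n) → Bool) → ℝ :=
  tensor (symmMaj m) 1 + tensor (tie m) t

lemma fourierWeight_zero_tieBreak (t : (Fin n → Bool) → ℝ) :
    fourierWeight 0 (tieBreak m t) = tieProb m ^ 2 * fourierWeight 0 t := by
  rw [fourierWeight_zero, fourierWeight_zero, tieBreak, fourierCoeff_add,
    fourierCoeff_tensor_empty, fourierCoeff_tensor_empty, fourierCoeff_symmMaj_empty, tieProb]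
  ring

lemma fourierWeight_one_tieBreak {t : (Fin n → Bool) → ℝ} (ht : fourierCoeff t ∅ = 0) :
    fourierWeight 1 (tieBreak m t) =
      fourierWeight 1 (symmMaj m) + tieProb m ^ 2 * fourierWeight 1 t := by
  simp only [fourierWeight_one, tieBreak, Fin.sum_univ_add, fourierCoeff_add,
    fourierCoeff_tensor_castAdd, fourierCoeff_tensor_natAdd, fourierCoeff_one_empty,
    fourierCoeff_symmMaj_empty, ht, ← tieProb.eq_def, mul_sum, mul_pow, mul_one, mul_zero,
    zero_mul, add_zero, zero_add]

lemma sgn_mul_add_of_abs_lt {a b c : ℝ} (hc : 0 < c) (h : |b| < c * |a|) :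
    sgn (c * a + b) = Real.sign a := by
  obtain ⟨lower, upper⟩ := abs_lt.mp h
  rcases lt_or_ge a 0 with ha | ha
  · rw [abs_of_neg ha] at upper
    rw [sgn, if_neg (by linarith), Real.sign_of_neg ha]
  · have ha' : 0 < a := abs_of_nonneg ha ▸ pos_of_mul_pos_right ((abs_nonneg b).trans_lt h) hc.le
    rw [abs_of_pos ha'] at lower
    rw [sgn, if_pos (by linarith), Real.sign_of_pos ha']

end TieBreak

section ThresholdFunctions

variable {m : ℕ}

lemma gfun_eq_tieBreak (hm : Even m) : gfun (m + 3) = tieBreak m (Maj 3) := by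
  ext x
  set y : Fin m → Bool := fun i ↦ x (Fin.castAdd 3 i)
  set z : Fin 3 → Bool := fun j ↦ x (Fin.natAdd m j)
  have gfun_eq : gfun (m + 3) x = sgn (2 * bitSum y + bitSum z) := by
    simp [gfun, Fin.sum_univ_add, bitSum, mul_sum, y, z]
  change gfun (m + 3) x = Real.sign (bitSum y) * 1 + (if bitSum y = 0 then 1 else 0) * Maj 3 z
  rw [gfun_eq]
  by_cases hy : bitSum y = 0
  · simp [hy, Maj, ← bitSum.eq_def]
  · have dominates : |bitSum z| < 2 * |bitSum y| := calc
      |bitSum z| ≤ 3 := abs_bitSum_le z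
      _ < 2 * 2 := by norm_num
      _ ≤ 2 * |bitSum y| := by gcongr; exact two_le_abs_bitSum_of_even hm hy
    rw [sgn_mul_add_of_abs_lt two_pos dominates, if_neg hy]
    ring

lemma fourierWeight_zero_gfun (hm : Even m) : fourierWeight 0 (gfun (m + 3)) = 0 := by
  rw [gfun_eq_tieBreak hm, fourierWeight_zero_tieBreak, fourierWeight_zero,
    fourierCoeff_maj_empty_of_odd (by decide)]
  ring

lemma fourierWeight_one_gfun (hm : Even m) :
    fourierWeight 1 (gfun (m + 3)) = (m + 3 / 4) * tieProb m ^ 2 := by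
  rw [gfun_eq_tieBreak hm,
    fourierWeight_one_tieBreak (fourierCoeff_maj_empty_of_odd (by decide)),
    fourierWeight_one_symmMaj_of_even hm, fourierWeight_one_maj_three]
  ring

lemma fourierWeight_one_gfun_lt_maj (hm : Even m) (hpos : 0 < m) :
    fourierWeight 1 (gfun (m + 3)) < fourierWeight 1 (Maj (m + 3)) := by
  have weight_maj : fourierWeight 1 (Maj (m + 3)) =
      (m + 3) * ((m + 1) / (m + 2) * tieProb m) ^ 2 := by
    rw [fourierWeight_one_maj_of_even (hm.add even_two), tieProb_add_two]
    push_cast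
    ring
  have gap : fourierWeight 1 (Maj (m + 3)) - fourierWeight 1 (gfun (m + 3)) =
      (m * tieProb m / (2 * (m + 2))) ^ 2 := by
    rw [weight_maj, fourierWeight_one_gfun hm]
    field_simp
    ring
  have := tieProb_pos_of_even hm
  rw [← sub_pos, gap]
  positivity

lemma hfun_eq_gfun_comp_flipOn (n : ℕ) :
    hfun n = gfun n ∘ flipOn {i : Fin n | ¬(i : ℕ) < n - 3} := by
  ext x
  refine congrArg sgn (sum_congr rfl fun i _ ↦ ?_)
  simp only [chi_flipOn, mem_filter_univ]
  split_ifs <;> ring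

lemma fourierWeight_hfun (k n : ℕ) : fourierWeight k (hfun n) = fourierWeight k (gfun n) := by
  rw [hfun_eq_gfun_comp_flipOn, fourierWeight_comp_flipOn]

end ThresholdFunctions

theorem stmt12 (n : ℕ) (hn : Odd n) (h3 : 3 ≤ n) :
    fourierWeight 0 (hfun n) = 0 ∧
    fourierWeight 1 (hfun n) = fourierWeight 1 (gfun n) ∧
    (5 ≤ n → fourierWeight 1 (hfun n) < fourierWeight 1 (Maj n)) := by
  obtain ⟨m, rfl⟩ := Nat.exists_eq_add_of_le' h3
  have hm : Even m := by grind
  refine ⟨?_, fourierWeight_hfun 1 _, fun h5 ↦ ?_⟩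
  · rw [fourierWeight_hfun, fourierWeight_zero_gfun hm]
  · rw [fourierWeight_hfun]
    exact fourierWeight_one_gfun_lt_maj hm (by lia)

end BKS
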